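/- For every i, j ∈ {1,…,k} with i ≠ j, the exclusive versions of the operations p ↦ p ∪ i, p ↦ p ∖ i, and p ↦ η_{i,j}(p) all preserve representation: for all finite families R, S of treewidth patterns such that R represents S, the family ôp(R) represents ôp(S), where ôp(S) denotes the set of treewidth patterns p' such that the number of q ∈ S with op(q) = p' is odd. -/

import Mathlib

/-- A (candidate) treewidth pattern: a finite collection of blocks of labels in
`{0,…,k}`. -/
abbrev TWP (k : ℕ) := Finset (Finset (Fin (k + 1)))

/-- A treewidth pattern: a partition of a subset `L_p ⊆ {0,…,k}` containing `0`. -/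
def IsTWPat {k : ℕ} (p : TWP k) : Prop :=
  (∀ S ∈ p, S.Nonempty) ∧ (∀ S ∈ p, ∀ T ∈ p, S ≠ T → Disjoint S T) ∧
    ∃ S ∈ p, (0 : Fin (k + 1)) ∈ S

/-- The label set `L_p` of a pattern. -/
def labels {k : ℕ} (p : TWP k) : Finset (Fin (k + 1)) := p.sup id

/-- The glueing of the canonical forests of two treewidth patterns `p` and `q`: the
(identified) boundary vertices are represented by their labels, and each block gets a
star center adjacent to the labels it contains.  (Labels outside `L_p` are isolated and
affect neither acyclicity nor components meeting the boundary.) -/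
def glueTP {k : ℕ} (p q : TWP k) :
    SimpleGraph (Fin (k + 1) ⊕ ({S // S ∈ p} ⊕ {S // S ∈ q})) :=
  SimpleGraph.fromRel fun x y =>
    match x, y with
    | Sum.inl ℓ, Sum.inr (Sum.inl S) => ℓ ∈ S.1
    | Sum.inl ℓ, Sum.inr (Sum.inr S) => ℓ ∈ S.1
    | _, _ => False

/-- Compatibility `p ◁ q` of treewidth patterns: the label sets agree and the glueing of
the canonical forests is acyclic. -/
def Compat {k : ℕ} (p q : TWP k) : Prop :=
  labels p = labels q ∧ (glueTP p q).IsAcyclic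

open scoped Classical in
/-- The join `p ⋈ q` of two treewidth patterns: `⊥` (i.e. `none`) if the label sets differ
or the glueing of the canonical forests contains a cycle; otherwise the pattern whose
blocks are the label sets of the connected components of the glued forest. -/
noncomputable def joinTP {k : ℕ} (p q : TWP k) : Option (TWP k) :=
  if labels p = labels q ∧ (glueTP p q).IsAcyclic then
    some ((labels p).image fun ℓ =>
      (labels p).filter fun ℓ' => (glueTP p q).Reachable (Sum.inl ℓ) (Sum.inl ℓ'))
  else none

open scoped Classical in
/-- A family `R` of treewidth patterns represents a family `S` if for every treewidth
pattern `r`, the numbers of patterns of `R` and of `S` compatible with `r` agree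
modulo 2. -/
def Represents {k : ℕ} (R S : Finset (TWP k)) : Prop :=
  ∀ r : TWP k, IsTWPat r →
    (R.filter fun pp => Compat pp r).card % 2 = (S.filter fun pp => Compat pp r).card % 2

/-- The operation `p ∪ i`: `⊥` if `i ∈ L_p`, otherwise `p` with `{i}` added as a new
singleton block. -/
def addLab {k : ℕ} (i : Fin (k + 1)) (p : TWP k) : Option (TWP k) :=
  if i ∈ labels p then none else some (insert {i} p)

/-- The operation `p ∖ i`: `p` itself if `i ∉ L_p`, otherwise the pattern obtained by
removing `i` from its block (deleting the block if it becomes empty). -/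
def delLab {k : ℕ} (i : Fin (k + 1)) (p : TWP k) : Option (TWP k) :=
  some ((p.filter fun S => i ∉ S) ∪
    ((p.filter fun S => i ∈ S).image fun S => S.erase i).filter fun S => S.Nonempty)

/-- The operation `η_{i,j}(p)`: `⊥` if `i` and `j` lie in the same block, `p` if `i` or
`j` is missing from `L_p`, and otherwise the pattern obtained by merging the blocks
containing `i` and `j`. -/
def etaOp {k : ℕ} (i j : Fin (k + 1)) (p : TWP k) : Option (TWP k) :=
  if ∃ S ∈ p, i ∈ S ∧ j ∈ S then none
  else if i ∉ labels p ∨ j ∉ labels p then some p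
  else some (insert ((p.filter fun S => i ∈ S ∨ j ∈ S).sup id)
    (p.filter fun S => i ∉ S ∧ j ∉ S))

/-- The exclusive version `ôp(S)` of an operation: the set of patterns `p'` (excluding
`⊥`) such that the number of `q ∈ S` with `op q = p'` is odd. -/
def exOp {k : ℕ} (op : TWP k → Option (TWP k)) (S : Finset (TWP k)) : Finset (TWP k) :=
  (S.biUnion fun q => (op q).toFinset).filter fun p' =>
    (S.filter fun q => op q = some p').card % 2 = 1

/-!
If two patterns have the same labels, every label has degree two in the glueing of their canonical
forests, one edge going to each side. A vector of the cycle space over `ZMod 2` is therefore a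
function on the labels whose sum over every block of either pattern vanishes, and the patterns are
compatible iff no such function is nonzero on their labels.

This linear criterion yields, for each operation `op`, an adjoint with respect to the compatibility
pairing modulo 2: a map `D` from patterns to finite families of patterns such that `op q` is
compatible with `r` iff `q` is compatible with an odd number of members of `D r`. The number of
members of `ôp(R)` compatible with `r` then has the parity of the number of pairs `(q, r')` of
compatible patterns with `q ∈ R` and `r' ∈ D r`, and if `R` represents `S` this parity does not
change when `R` is replaced by `S`. The adjoints are:
* for `· ∪ i`: `{r ∖ i}` if `i` is a label of `r`, and `∅` otherwise;
* for `· ∖ i`: `{r, r ∪ i}` if `i` is not a label of `r`, and `∅` otherwise;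
* for `η_{i,j}`: the operation itself, because merging the blocks of `i` and `j` has the same effect
  on cycles as adding an edge between `i` and `j` to the glueing, and this is symmetric in the two
  patterns.
-/

open Finset

section EvenSubgraphs

variable {V : Type*} [Finite V] {G : SimpleGraph V}

theorem exists_ncard_neighborSet_eq_one_of_isAcyclic (hG : G.IsAcyclic) (hne : G ≠ ⊥) :
    ∃ v, (G.neighborSet v).ncard = 1 := by
  obtain ⟨u, v, huv⟩ := SimpleGraph.ne_bot_iff_exists_adj.1 hne
  have : Nonempty V := ⟨u⟩
  obtain ⟨a, b, p, hp, hmax⟩ := SimpleGraph.Walk.exists_isPath_forall_isPath_length_le_length G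
  have hnil : ¬ p.Nil := by
    have hlength := hmax u v huv.toWalk (by simp [huv.ne])
    simpa [SimpleGraph.Walk.not_nil_iff_lt_length, Nat.succ_le_iff] using hlength
  refine ⟨b, Set.ncard_eq_one.2 ⟨p.penultimate, Set.eq_singleton_iff_unique_mem.2
    ⟨(p.adj_penultimate hnil).symm, fun w (hbw : G.Adj b w) => ?_⟩⟩⟩
  by_cases hw : w ∈ p.support
  · exact hG.eq_penultimate_of_adj_end hp hbw hw
  · have hlength := hmax a w _ (hp.concat hw hbw)
    simp at hlength

theorem isAcyclic_iff_forall_le_even_eq_bot :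
    G.IsAcyclic ↔ ∀ H ≤ G, (∀ v, Even (H.neighborSet v).ncard) → H = ⊥ := by
  refine ⟨fun hG H hle heven => by_contra fun hne => ?_, fun h u c hc => ?_⟩
  · obtain ⟨v, hv⟩ := exists_ncard_neighborSet_eq_one_of_isAcyclic (hG.anti hle) hne
    exact absurd (hv ▸ heven v) (by decide)
  · have hbot : c.toSubgraph.spanningCoe = ⊥ := by
      refine h _ c.toSubgraph.spanningCoe_le fun v => ?_
      change Even (c.toSubgraph.neighborSet v).ncard
      by_cases hv : v ∈ c.support
      · exact hc.ncard_neighborSet_toSubgraph_eq_two hv ▸ even_two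
      · have hempty : c.toSubgraph.neighborSet v = ∅ := Set.eq_empty_of_forall_notMem fun w hw =>
          hv (c.mem_verts_toSubgraph.1 (c.toSubgraph.edge_vert hw))
        simp [hempty]
    have hadj : c.toSubgraph.spanningCoe.Adj u c.snd := c.toSubgraph_adj_snd hc.not_nil
    simp [hbot] at hadj

end EvenSubgraphs

section IncidenceGraph

variable {α ι : Type*}

/-- The bipartite incidence graph between the elements of `α` and the members of a family of
finite subsets of `α`. For the family of all blocks of two patterns it is their glueing. -/
def incidenceGraph (B : ι → Finset α) : SimpleGraph (α ⊕ ι) :=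
  SimpleGraph.fromRel fun x y =>
    match x, y with
    | Sum.inl a, Sum.inr b => a ∈ B b
    | _, _ => False

variable {B : ι → Finset α} {f : α → ZMod 2}

@[simp]
theorem incidenceGraph_adj_inl_inr {a : α} {b : ι} :
    (incidenceGraph B).Adj (Sum.inl a) (Sum.inr b) ↔ a ∈ B b := by
  simp [incidenceGraph]

@[simp]
theorem not_incidenceGraph_adj_inl_inl {a a' : α} :
    ¬ (incidenceGraph B).Adj (Sum.inl a) (Sum.inl a') := by
  simp [incidenceGraph]

@[simp]
theorem not_incidenceGraph_adj_inr_inr {b b' : ι} :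
    ¬ (incidenceGraph B).Adj (Sum.inr b) (Sum.inr b') := by
  simp [incidenceGraph]

theorem incidenceGraph_mono {A B : ι → Finset α} (hAB : ∀ b, A b ⊆ B b) :
    incidenceGraph A ≤ incidenceGraph B := by
  rintro (a | b) (a' | b') <;> simp only [incidenceGraph, SimpleGraph.fromRel_adj] <;> grind

theorem neighborSet_inl_of_le_incidenceGraph {H : SimpleGraph (α ⊕ ι)}
    (hle : H ≤ incidenceGraph B) (a : α) :
    H.neighborSet (Sum.inl a) = Sum.inr '' {b | H.Adj (Sum.inl a) (Sum.inr b)} := by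
  ext (a' | b)
  · simpa using fun h => not_incidenceGraph_adj_inl_inl (hle h)
  · simp

theorem neighborSet_inr_of_le_incidenceGraph {H : SimpleGraph (α ⊕ ι)}
    (hle : H ≤ incidenceGraph B) (b : ι) :
    H.neighborSet (Sum.inr b) = Sum.inl '' {a | H.Adj (Sum.inl a) (Sum.inr b)} := by
  ext (a | b')
  · simp [H.adj_comm]
  · simpa using fun h => not_incidenceGraph_adj_inr_inr (hle h)

theorem sum_zmod_two_eq_card_filter_ne_zero (s : Finset α) :
    ∑ a ∈ s, f a = (#{a ∈ s | f a ≠ 0} : ZMod 2) := by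
  rw [← sum_boole]
  refine sum_congr rfl fun a _ => ?_
  generalize f a = x
  decide +revert

theorem eq_bot_of_le_incidenceGraph {H : SimpleGraph (α ⊕ ι)} (hle : H ≤ incidenceGraph B)
    (h : ∀ a b, ¬ H.Adj (Sum.inl a) (Sum.inr b)) : H = ⊥ := by
  rw [SimpleGraph.eq_bot_iff_forall_not_adj]
  rintro (a | b) (a' | b') hadj
  · exact not_incidenceGraph_adj_inl_inl (hle hadj)
  · exact h a b' hadj
  · exact h a' b hadj.symm
  · exact not_incidenceGraph_adj_inr_inr (hle hadj)

theorem even_ncard_neighborSet_inr_iff {H : SimpleGraph (α ⊕ ι)} (hle : H ≤ incidenceGraph B)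
    (b : ι) (hH : ∀ a, H.Adj (Sum.inl a) (Sum.inr b) ↔ a ∈ B b ∧ f a ≠ 0) :
    Even (H.neighborSet (Sum.inr b)).ncard ↔ ∑ a ∈ B b, f a = 0 := by
  have hset : {a | H.Adj (Sum.inl a) (Sum.inr b)} = ↑({a ∈ B b | f a ≠ 0} : Finset α) := by
    ext a
    simp [hH]
  rw [neighborSet_inr_of_le_incidenceGraph hle, Set.ncard_image_of_injective _ Sum.inl_injective,
    hset, Set.ncard_coe_finset, sum_zmod_two_eq_card_filter_ne_zero, ZMod.natCast_eq_zero_iff_even]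

theorem even_ncard_neighborSet_incidenceGraph_filter
    (hB : ∀ b, ∀ a ∈ B b, {b | a ∈ B b}.ncard = 2) (hf : ∀ b, ∑ a ∈ B b, f a = 0) (v : α ⊕ ι) :
    Even ((incidenceGraph fun b => {a ∈ B b | f a ≠ 0}).neighborSet v).ncard := by
  have hle : incidenceGraph (fun b => {a ∈ B b | f a ≠ 0}) ≤ incidenceGraph B :=
    incidenceGraph_mono fun b => filter_subset _ _
  rcases v with a | b
  · rw [neighborSet_inl_of_le_incidenceGraph hle, Set.ncard_image_of_injective _ Sum.inr_injective]
    by_cases ha : ∃ b, a ∈ B b ∧ f a ≠ 0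
    · obtain ⟨b, hab, hfa⟩ := ha
      simp [hfa, hB b a hab]
    · have hempty : {b | a ∈ B b ∧ f a ≠ 0} = ∅ :=
        Set.eq_empty_of_forall_notMem fun b hb => ha ⟨b, hb⟩
      simp [-ne_eq, hempty]
  · exact (even_ncard_neighborSet_inr_iff hle b (by simp)).2 (hf b)

theorem adj_of_even_ncard_of_adj {H : SimpleGraph (α ⊕ ι)} (hle : H ≤ incidenceGraph B)
    {a : α} (ha : {b | a ∈ B b}.ncard = 2) (heven : Even (H.neighborSet (Sum.inl a)).ncard)
    {b b' : ι} (hadj : H.Adj (Sum.inl a) (Sum.inr b')) (hab : a ∈ B b) :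
    H.Adj (Sum.inl a) (Sum.inr b) := by
  rw [neighborSet_inl_of_le_incidenceGraph hle,
    Set.ncard_image_of_injective _ Sum.inr_injective] at heven
  have hfin : {b | a ∈ B b}.Finite := Set.finite_of_ncard_ne_zero (by simp [ha])
  have hsub : {b | H.Adj (Sum.inl a) (Sum.inr b)} ⊆ {b | a ∈ B b} :=
    fun b hb => incidenceGraph_adj_inl_inr.1 (hle hb)
  have hpos : 0 < {b | H.Adj (Sum.inl a) (Sum.inr b)}.ncard :=
    (Set.ncard_pos (hfin.subset hsub)).2 ⟨b', hadj⟩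
  have htwo : 2 ≤ {b | H.Adj (Sum.inl a) (Sum.inr b)}.ncard := by
    obtain ⟨n, hn⟩ := heven
    lia
  have heq := Set.eq_of_subset_of_ncard_le hsub (ha ▸ htwo) hfin
  exact (Set.ext_iff.1 heq b).2 hab

theorem isAcyclic_incidenceGraph_iff [Finite α] [Finite ι]
    (hB : ∀ b, ∀ a ∈ B b, {b | a ∈ B b}.ncard = 2) :
    (incidenceGraph B).IsAcyclic ↔
      ∀ f : α → ZMod 2, (∀ b, ∑ a ∈ B b, f a = 0) → ∀ b, ∀ a ∈ B b, f a = 0 := by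
  classical
  rw [isAcyclic_iff_forall_le_even_eq_bot]
  constructor
  · intro h f hf b a hab
    by_contra hfa
    have hbot := h _ (incidenceGraph_mono fun b => filter_subset (f · ≠ 0) (B b))
      (even_ncard_neighborSet_incidenceGraph_filter hB hf)
    have hadj : (incidenceGraph fun b => {a ∈ B b | f a ≠ 0}).Adj (Sum.inl a) (Sum.inr b) := by
      simp [hab, hfa]
    simp [hbot] at hadj
  · intro h H hle heven
    let f : α → ZMod 2 := fun a => if ∃ b, H.Adj (Sum.inl a) (Sum.inr b) then 1 else 0
    have hmem {a b} (hadj : H.Adj (Sum.inl a) (Sum.inr b)) : a ∈ B b :=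
      incidenceGraph_adj_inl_inr.1 (hle hadj)
    have hH (a b) : H.Adj (Sum.inl a) (Sum.inr b) ↔ a ∈ B b ∧ f a ≠ 0 := by
      simp only [f, ne_eq, ite_eq_right_iff, one_ne_zero, imp_false, not_not]
      exact ⟨fun hadj => ⟨hmem hadj, b, hadj⟩, fun ⟨hab, _, hadj⟩ =>
        adj_of_even_ncard_of_adj hle (hB b a hab) (heven _) hadj hab⟩
    have hf (b) : ∑ a ∈ B b, f a = 0 :=
      (even_ncard_neighborSet_inr_iff hle b (hH · b)).1 (heven _)
    exact eq_bot_of_le_incidenceGraph hle fun a b hadj =>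
      ((hH a b).1 hadj).2 (h f hf b a (hmem hadj))

end IncidenceGraph

section TreewidthPatterns

variable {k : ℕ} {i j l : Fin (k + 1)} {p q r : TWP k} {f : Fin (k + 1) → ZMod 2}

section Patterns

theorem mem_labels : l ∈ labels p ↔ ∃ S ∈ p, l ∈ S := by
  simp [labels, mem_sup]

/-- Distinct blocks of `p` are disjoint. Unlike for treewidth patterns, `∅` may be a block and the
label `0` may be missing. -/
abbrev BlocksDisjoint (p : TWP k) : Prop :=
  (p : Set (Finset (Fin (k + 1)))).PairwiseDisjoint id

theorem isTWPat_iff : IsTWPat p ↔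
    (∀ S ∈ p, S.Nonempty) ∧ BlocksDisjoint p ∧ 0 ∈ labels p := by
  rw [mem_labels]
  rfl

theorem IsTWPat.blocksDisjoint (hp : IsTWPat p) : BlocksDisjoint p :=
  (isTWPat_iff.1 hp).2.1

theorem labels_insert_singleton : labels (insert {i} p) = insert i (labels p) := by
  ext l
  simp [mem_labels]

theorem BlocksDisjoint.insert_singleton (hp : BlocksDisjoint p) (hi : i ∉ labels p) :
    BlocksDisjoint (insert {i} p) := by
  rw [BlocksDisjoint, coe_insert]
  exact hp.insert fun S hS _ => disjoint_singleton_left.2 fun hiS => hi (mem_labels.2 ⟨S, hS, hiS⟩)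

theorem IsTWPat.insert_singleton (hp : IsTWPat p) (hi : i ∉ labels p) :
    IsTWPat (insert {i} p) := by
  rw [isTWPat_iff] at hp ⊢
  exact ⟨by simpa using hp.1, hp.2.1.insert_singleton hi, by simp [labels_insert_singleton, hp.2.2]⟩

/-- The pattern `p ∖ i`, as a total operation: the value of `delLab i p`. -/
def eraseLabel (i : Fin (k + 1)) (p : TWP k) : TWP k :=
  (p.filter fun S => i ∉ S) ∪
    ((p.filter fun S => i ∈ S).image fun S => S.erase i).filter fun S => S.Nonempty

theorem mem_eraseLabel_iff {S : Finset (Fin (k + 1))} : S ∈ eraseLabel i p ↔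
    (S ∈ p ∧ i ∉ S) ∨ (S.Nonempty ∧ ∃ T ∈ p, i ∈ T ∧ T.erase i = S) := by
  simp only [eraseLabel, mem_union, mem_filter, mem_image]
  grind

theorem exists_erase_eq_of_mem_eraseLabel {S : Finset (Fin (k + 1))} (hS : S ∈ eraseLabel i p) :
    ∃ T ∈ p, T.erase i = S := by
  rcases mem_eraseLabel_iff.1 hS with ⟨hS, hi⟩ | ⟨-, T, hT, -, hTS⟩
  · exact ⟨S, hS, erase_eq_of_notMem hi⟩
  · exact ⟨T, hT, hTS⟩

theorem erase_mem_eraseLabel {S : Finset (Fin (k + 1))} (hS : S ∈ p)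
    (hne : (S.erase i).Nonempty) : S.erase i ∈ eraseLabel i p := by
  rw [mem_eraseLabel_iff]
  by_cases hi : i ∈ S
  · exact Or.inr ⟨hne, S, hS, hi, rfl⟩
  · exact Or.inl ⟨by rwa [erase_eq_of_notMem hi], by simp⟩

theorem labels_eraseLabel : labels (eraseLabel i p) = (labels p).erase i := by
  ext l
  rw [mem_erase, mem_labels, mem_labels]
  constructor
  · rintro ⟨S, hS, hl⟩
    obtain ⟨T, hT, rfl⟩ := exists_erase_eq_of_mem_eraseLabel hS
    exact ⟨ne_of_mem_erase hl, T, hT, mem_of_mem_erase hl⟩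
  · rintro ⟨hli, S, hS, hl⟩
    have hl' : l ∈ S.erase i := mem_erase.2 ⟨hli, hl⟩
    exact ⟨S.erase i, erase_mem_eraseLabel hS ⟨l, hl'⟩, hl'⟩

theorem eraseLabel_of_notMem_labels (hi : i ∉ labels p) : eraseLabel i p = p := by
  ext S
  rw [mem_eraseLabel_iff]
  rw [mem_labels] at hi
  grind

theorem BlocksDisjoint.eraseLabel (hp : BlocksDisjoint p) : BlocksDisjoint (eraseLabel i p) := by
  intro S hS T hT hST
  obtain ⟨S', hS', rfl⟩ := exists_erase_eq_of_mem_eraseLabel hS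
  obtain ⟨T', hT', rfl⟩ := exists_erase_eq_of_mem_eraseLabel hT
  exact (hp hS' hT' fun h => hST (h ▸ rfl)).mono (erase_subset _ _) (erase_subset _ _)

theorem IsTWPat.eraseLabel (hp : IsTWPat p) (hi : i ≠ 0) : IsTWPat (eraseLabel i p) := by
  rw [isTWPat_iff] at hp ⊢
  obtain ⟨hne, hdisj, h0⟩ := hp
  refine ⟨fun S hS => ?_, hdisj.eraseLabel,
    by simp [labels_eraseLabel, hi.symm, h0]⟩
  rcases mem_eraseLabel_iff.1 hS with ⟨hS, -⟩ | ⟨hS, -⟩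
  exacts [hne S hS, hS]

/-- The pattern `p` with all blocks containing `i` or `j` replaced by their union: the value of
`etaOp i j p` when `i` and `j` lie in different blocks. -/
def mergeBlocks (i j : Fin (k + 1)) (p : TWP k) : TWP k :=
  insert ((p.filter fun S => i ∈ S ∨ j ∈ S).sup id) (p.filter fun S => i ∉ S ∧ j ∉ S)

theorem labels_mergeBlocks : labels (mergeBlocks i j p) = labels p := by
  have hcompl : {S ∈ p | i ∉ S ∧ j ∉ S} = {S ∈ p | ¬ (i ∈ S ∨ j ∈ S)} :=
    filter_congr fun S _ => not_or.symm
  rw [labels, mergeBlocks, sup_insert, hcompl, id, ← sup_union, filter_union_filter_not_eq, labels]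

theorem mergeBlocks_eq_insert_union (hp : BlocksDisjoint p) {A B : Finset (Fin (k + 1))}
    (hA : A ∈ p) (hB : B ∈ p) (hi : i ∈ A) (hj : j ∈ B) :
    mergeBlocks i j p = insert (A ∪ B) (p.filter fun S => i ∉ S ∧ j ∉ S) := by
  have hfilter : (p.filter fun S => i ∈ S ∨ j ∈ S) = {A, B} := by
    ext S
    simp only [mem_filter, mem_insert, mem_singleton]
    refine ⟨fun ⟨hS, hij⟩ => hij.imp (fun hiS => ?_) (fun hjS => ?_), ?_⟩
    · exact hp.elim_finset hS hA i hiS hi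
    · exact hp.elim_finset hS hB j hjS hj
    · rintro (rfl | rfl)
      exacts [⟨hA, Or.inl hi⟩, ⟨hB, Or.inr hj⟩]
  rw [mergeBlocks, hfilter, sup_insert, sup_singleton]
  rfl

theorem BlocksDisjoint.mergeBlocks (hp : BlocksDisjoint p) (hi : i ∈ labels p) (hj : j ∈ labels p) :
    BlocksDisjoint (mergeBlocks i j p) := by
  obtain ⟨A, hA, hiA⟩ := mem_labels.1 hi
  obtain ⟨B, hB, hjB⟩ := mem_labels.1 hj
  rw [BlocksDisjoint, mergeBlocks_eq_insert_union hp hA hB hiA hjB, coe_insert]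
  refine (hp.subset (filter_subset _ p)).insert fun S hS _ => ?_
  obtain ⟨hS, hiS, hjS⟩ := mem_filter.1 hS
  exact disjoint_union_left.2 ⟨hp hA hS fun h => hiS (h ▸ hiA), hp hB hS fun h => hjS (h ▸ hjB)⟩

theorem IsTWPat.mergeBlocks (hp : IsTWPat p) (hi : i ∈ labels p) (hj : j ∈ labels p) :
    IsTWPat (mergeBlocks i j p) := by
  rw [isTWPat_iff] at hp ⊢
  obtain ⟨hne, hdisj, h0⟩ := hp
  refine ⟨?_, hdisj.mergeBlocks hi hj, by rwa [labels_mergeBlocks]⟩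
  obtain ⟨A, hA, hiA⟩ := mem_labels.1 hi
  obtain ⟨B, hB, hjB⟩ := mem_labels.1 hj
  rw [mergeBlocks_eq_insert_union hdisj hA hB hiA hjB]
  simp only [forall_mem_insert, mem_filter]
  exact ⟨⟨i, mem_union_left B hiA⟩, fun S hS => hne S hS.1⟩

end Patterns

section Compatibility

theorem glueTP_eq_incidenceGraph :
    glueTP p q = incidenceGraph (Sum.elim Subtype.val Subtype.val) := by
  ext (l | S | S) (l' | T | T) <;> simp [glueTP, incidenceGraph]

theorem compat_comm : Compat p q ↔ Compat q p := by
  let e : glueTP p q ≃g glueTP q p :=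
    { toEquiv := Equiv.sumCongr (Equiv.refl _) (Equiv.sumComm _ _)
      map_rel_iff' := by rintro (l | S | S) (l' | T | T) <;> simp [glueTP] }
  rw [Compat, Compat, e.isAcyclic_iff, eq_comm]

/-- The sums of `f` over the blocks of `p` all vanish. If `p` and `q` are patterns with the same
labels, every label lies on exactly two edges of their glueing, and assigning the value `f l` to
both edges at `l` identifies the functions satisfying this condition for both `p` and `q` with the
cycle space of the glueing over `ZMod 2`. -/
def BlockSumsVanish (p : TWP k) (f : Fin (k + 1) → ZMod 2) : Prop :=
  ∀ S ∈ p, ∑ l ∈ S, f l = 0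

theorem ncard_blocks_containing (hp : BlocksDisjoint p) (hq : BlocksDisjoint q)
    (hlp : l ∈ labels p) (hlq : l ∈ labels q) :
    {b : {S // S ∈ p} ⊕ {S // S ∈ q} |
      l ∈ (Sum.elim Subtype.val Subtype.val b : Finset (Fin (k + 1)))}.ncard = 2 := by
  obtain ⟨S, hS, hlS⟩ := mem_labels.1 hlp
  obtain ⟨T, hT, hlT⟩ := mem_labels.1 hlq
  refine Set.ncard_eq_two.2 ⟨Sum.inl ⟨S, hS⟩, Sum.inr ⟨T, hT⟩, Sum.inl_ne_inr, ?_⟩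
  ext (⟨A, hA⟩ | ⟨A, hA⟩)
  · simpa using ⟨fun hl => hp.elim_finset hA hS l hl hlS, fun h => h ▸ hlS⟩
  · simpa using ⟨fun hl => hq.elim_finset hA hT l hl hlT, fun h => h ▸ hlT⟩

theorem compat_iff_forall_blockSumsVanish (hp : BlocksDisjoint p) (hq : BlocksDisjoint q) :
    Compat p q ↔ labels p = labels q ∧
      ∀ f, BlockSumsVanish p f → BlockSumsVanish q f → ∀ l ∈ labels p, f l = 0 := by
  refine and_congr_right fun hlabels => ?_
  rw [glueTP_eq_incidenceGraph, isAcyclic_incidenceGraph_iff]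
  · simp only [Sum.forall, Sum.elim_inl, Sum.elim_inr, Subtype.forall, and_imp]
    refine forall_congr' fun f => imp_congr_right fun _ => imp_congr_right fun _ => ?_
    have hp' : (∀ S ∈ p, ∀ l ∈ S, f l = 0) ↔ ∀ l ∈ labels p, f l = 0 := by
      simp only [mem_labels]
      grind
    have hq' : (∀ S ∈ q, ∀ l ∈ S, f l = 0) ↔ ∀ l ∈ labels q, f l = 0 := by
      simp only [mem_labels]
      grind
    rw [hp', hq', ← hlabels, and_self]
  · rintro (⟨S, hS⟩ | ⟨S, hS⟩) l hl
    · have hlp : l ∈ labels p := mem_labels.2 ⟨S, hS, hl⟩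
      exact ncard_blocks_containing hp hq hlp (hlabels ▸ hlp)
    · have hlq : l ∈ labels q := mem_labels.2 ⟨S, hS, hl⟩
      exact ncard_blocks_containing hp hq (hlabels ▸ hlq) hlq

end Compatibility

section Duality

theorem blockSumsVanish_insert_singleton_iff :
    BlockSumsVanish (insert {i} p) f ↔ f i = 0 ∧ BlockSumsVanish p f := by
  simp [BlockSumsVanish]

theorem sum_erase_eq_sum_update_zero {α M : Type*} [DecidableEq α] [AddCommMonoid M]
    (s : Finset α) (g : α → M) (a : α) :
    ∑ x ∈ s.erase a, g x = ∑ x ∈ s, Function.update g a 0 x := by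
  rw [← sum_erase s (Function.update_self a 0 g)]
  exact sum_congr rfl fun x hx => (Function.update_of_ne (ne_of_mem_erase hx) 0 g).symm

theorem blockSumsVanish_eraseLabel_iff :
    BlockSumsVanish (eraseLabel i p) f ↔ BlockSumsVanish p (Function.update f i 0) := by
  constructor
  · intro h S hS
    rw [← sum_erase_eq_sum_update_zero]
    rcases (S.erase i).eq_empty_or_nonempty with hempty | hne
    · rw [hempty, sum_empty]
    · exact h _ (erase_mem_eraseLabel hS hne)
  · intro h S hS
    obtain ⟨T, hT, rfl⟩ := exists_erase_eq_of_mem_eraseLabel hS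
    rw [sum_erase_eq_sum_update_zero]
    exact h T hT

theorem blockSumsVanish_update_iff_of_notMem_labels (hi : i ∉ labels p) :
    BlockSumsVanish p (Function.update f i 0) ↔ BlockSumsVanish p f := by
  rw [← blockSumsVanish_eraseLabel_iff, eraseLabel_of_notMem_labels hi]

theorem labels_insert_singleton_eq_iff (hi : i ∉ labels q) :
    labels (insert {i} q) = labels r ↔ i ∈ labels r ∧ labels q = labels (eraseLabel i r) := by
  rw [labels_insert_singleton, labels_eraseLabel]
  grind

theorem compat_insert_singleton_iff (hq : BlocksDisjoint q) (hr : BlocksDisjoint r)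
    (hi : i ∉ labels q) :
    Compat (insert {i} q) r ↔ i ∈ labels r ∧ Compat q (eraseLabel i r) := by
  rw [compat_iff_forall_blockSumsVanish (hq.insert_singleton hi) hr,
    compat_iff_forall_blockSumsVanish hq hr.eraseLabel, labels_insert_singleton_eq_iff hi,
    and_assoc]
  simp only [blockSumsVanish_insert_singleton_iff, blockSumsVanish_eraseLabel_iff,
    labels_insert_singleton, forall_mem_insert]
  refine and_congr_right fun _ => and_congr_right fun _ => ⟨fun h f hqf hrf l hl => ?_, ?_⟩
  · have hli : l ≠ i := fun hli => hi (hli ▸ hl)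
    rw [← blockSumsVanish_update_iff_of_notMem_labels hi] at hqf
    simpa [hli] using (h _ ⟨Function.update_self i 0 f, hqf⟩ hrf).2 l hl
  · rintro h f ⟨hfi, hqf⟩ hrf
    have hupdate : Function.update f i 0 = f := by rw [← hfi, Function.update_eq_self]
    exact ⟨hfi, h f hqf (hupdate.symm ▸ hrf)⟩

theorem compat_eraseLabel_iff (hq : BlocksDisjoint q) (hr : BlocksDisjoint r)
    (hi : i ∉ labels r) :
    Compat (eraseLabel i q) r ↔ Xor (Compat q r) (Compat q (insert {i} r)) := by
  by_cases hiq : i ∈ labels q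
  · have hnot : ¬ Compat q r := fun h => hi (h.1 ▸ hiq)
    have hiff : Compat (eraseLabel i q) r ↔ Compat q (insert {i} r) := by
      rw [compat_comm, compat_comm (q := insert {i} r), compat_insert_singleton_iff hr hq hi,
        and_iff_right hiq]
    simp [Xor, hnot, hiff]
  · have hnot : ¬ Compat q (insert {i} r) := fun h =>
      hiq (by simp [h.1, labels_insert_singleton])
    simp [Xor, hnot, eraseLabel_of_notMem_labels hiq]

/-- The boundary over `ZMod 2` of an edge between `i` and `j` with coefficient `a`, as a function on
the labels. It vanishes for `i = j`. -/
def endpointVector (i j : Fin (k + 1)) (a : ZMod 2) : Fin (k + 1) → ZMod 2 :=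
  Pi.single i a + Pi.single j a

theorem sum_endpointVector (S : Finset (Fin (k + 1))) (a : ZMod 2) :
    ∑ l ∈ S, endpointVector i j a l = (if i ∈ S then a else 0) + (if j ∈ S then a else 0) := by
  simp [endpointVector, sum_add_distrib, sum_pi_single']

theorem add_endpointVector_add_endpointVector (a : ZMod 2) :
    f + endpointVector i j a + endpointVector i j a = f := by
  ext l
  simp [add_assoc, CharTwo.add_self_eq_zero]

/-- The linear-algebraic form of the statement that the glueing of `p` and `q` stays acyclic when
an edge between the labels `i` and `j` is added: `a` is the coefficient of the new edge in a vector
of the cycle space. It is meant for `i` and `j` among the labels of `p`. -/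
def CompatWithEdge (i j : Fin (k + 1)) (p q : TWP k) : Prop :=
  labels p = labels q ∧ ∀ (f : Fin (k + 1) → ZMod 2) (a : ZMod 2),
    BlockSumsVanish p (f + endpointVector i j a) → BlockSumsVanish q f →
      a = 0 ∧ ∀ l ∈ labels p, f l = 0

theorem CompatWithEdge.symm (h : CompatWithEdge i j p q) : CompatWithEdge i j q p := by
  refine ⟨h.1.symm, fun f a hq hp => ?_⟩
  rw [← add_endpointVector_add_endpointVector (f := f) (i := i) (j := j) a] at hp
  obtain ⟨rfl, hf⟩ := h.2 _ a hp hq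
  exact ⟨rfl, by simpa [h.1, endpointVector] using hf⟩

theorem blockSumsVanish_endpointVector (hp : BlocksDisjoint p)
    (hij : ∃ S ∈ p, i ∈ S ∧ j ∈ S) (a : ZMod 2) : BlockSumsVanish p (endpointVector i j a) := by
  obtain ⟨S, hS, hi, hj⟩ := hij
  intro T hT
  have hiff : i ∈ T ↔ j ∈ T :=
    ⟨fun h => hp.elim_finset hS hT i hi h ▸ hj, fun h => hp.elim_finset hS hT j hj h ▸ hi⟩
  simp only [sum_endpointVector, hiff, CharTwo.add_self_eq_zero]

theorem blockSumsVanish_mergeBlocks_iff (hp : BlocksDisjoint p)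
    (hi : i ∈ labels p) (hj : j ∈ labels p) (hij : ¬ ∃ S ∈ p, i ∈ S ∧ j ∈ S) :
    BlockSumsVanish (mergeBlocks i j p) f ↔
      ∃ a, BlockSumsVanish p (f + endpointVector i j a) := by
  obtain ⟨A, hA, hiA⟩ := mem_labels.1 hi
  obtain ⟨B, hB, hjB⟩ := mem_labels.1 hj
  have hjA : j ∉ A := fun h => hij ⟨A, hA, hiA, h⟩
  have hiB : i ∉ B := fun h => hij ⟨B, hB, h, hjB⟩
  have hAB : Disjoint A B := hp hA hB fun h => hjA (h ▸ hjB)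
  simp only [BlockSumsVanish, mergeBlocks_eq_insert_union hp hA hB hiA hjB, forall_mem_insert,
    mem_filter, sum_union hAB, Pi.add_apply, sum_add_distrib, sum_endpointVector]
  constructor
  · rintro ⟨hsum, hrest⟩
    refine ⟨∑ l ∈ A, f l, fun S hS => ?_⟩
    by_cases hiS : i ∈ S
    · obtain rfl := hp.elim_finset hS hA i hiS hiA
      simp [hiA, hjA, CharTwo.add_self_eq_zero]
    · by_cases hjS : j ∈ S
      · obtain rfl := hp.elim_finset hS hB j hjS hjB
        simpa [hiB, hjB, add_comm] using hsum
      · simpa [hiS, hjS] using hrest S ⟨hS, hiS, hjS⟩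
  · rintro ⟨a, ha⟩
    have hsumA : ∑ l ∈ A, f l = a := CharTwo.add_eq_zero.1 (by simpa [hiA, hjA] using ha A hA)
    have hsumB : ∑ l ∈ B, f l = a := CharTwo.add_eq_zero.1 (by simpa [hiB, hjB] using ha B hB)
    refine ⟨by rw [hsumA, hsumB, CharTwo.add_self_eq_zero], fun S ⟨hS, hiS, hjS⟩ => ?_⟩
    simpa [hiS, hjS] using ha S hS

theorem compat_mergeBlocks_iff (hp : BlocksDisjoint p) (hq : BlocksDisjoint q)
    (hi : i ∈ labels p) (hj : j ∈ labels p) :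
    (¬ ∃ S ∈ p, i ∈ S ∧ j ∈ S) ∧ Compat (mergeBlocks i j p) q ↔ CompatWithEdge i j p q := by
  rw [compat_iff_forall_blockSumsVanish (hp.mergeBlocks hi hj) hq,
    labels_mergeBlocks]
  constructor
  · rintro ⟨hij, hlabels, h⟩
    refine ⟨hlabels, fun f a hpf hqf => ?_⟩
    have hf := h f ((blockSumsVanish_mergeBlocks_iff hp hi hj hij).2 ⟨a, hpf⟩) hqf
    obtain ⟨A, hA, hiA⟩ := mem_labels.1 hi
    have hjA : j ∉ A := fun h => hij ⟨A, hA, hiA, h⟩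
    have hsum : ∑ l ∈ A, f l = 0 := sum_eq_zero fun l hl => hf l (mem_labels.2 ⟨A, hA, hl⟩)
    have ha : a = 0 := by
      simpa [sum_add_distrib, hsum, sum_endpointVector, hiA, hjA] using hpf A hA
    exact ⟨ha, hf⟩
  · rintro ⟨hlabels, h⟩
    have hij : ¬ ∃ S ∈ p, i ∈ S ∧ j ∈ S := fun hij => one_ne_zero
      (h 0 1 (by simpa using blockSumsVanish_endpointVector hp hij 1) (by simp [BlockSumsVanish])).1
    refine ⟨hij, hlabels, fun f hpf hqf => ?_⟩
    obtain ⟨a, ha⟩ := (blockSumsVanish_mergeBlocks_iff hp hi hj hij).1 hpf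
    exact (h f a ha hqf).2

theorem etaOp_eq_some_self (h : ¬ (i ∈ labels p ∧ j ∈ labels p)) : etaOp i j p = some p := by
  have hij : ¬ ∃ S ∈ p, i ∈ S ∧ j ∈ S := fun ⟨S, hS, hi, hj⟩ =>
    h ⟨mem_labels.2 ⟨S, hS, hi⟩, mem_labels.2 ⟨S, hS, hj⟩⟩
  rw [etaOp, if_neg hij, if_pos (not_and_or.1 h)]

theorem mem_etaOp_iff (hi : i ∈ labels p) (hj : j ∈ labels p) :
    q ∈ etaOp i j p ↔ (¬ ∃ S ∈ p, i ∈ S ∧ j ∈ S) ∧ mergeBlocks i j p = q := by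
  by_cases hij : ∃ S ∈ p, i ∈ S ∧ j ∈ S
  · simp [etaOp, hij]
  · simp [etaOp, hij, hi, hj, mergeBlocks]

theorem labels_eq_of_mem_etaOp (h : q ∈ etaOp i j p) : labels q = labels p := by
  by_cases hij : i ∈ labels p ∧ j ∈ labels p
  · rw [← ((mem_etaOp_iff hij.1 hij.2).1 h).2, labels_mergeBlocks]
  · rw [etaOp_eq_some_self hij, Option.mem_some_iff] at h
    rw [h]

theorem IsTWPat.of_mem_etaOp (hp : IsTWPat p) (h : q ∈ etaOp i j p) : IsTWPat q := by
  by_cases hij : i ∈ labels p ∧ j ∈ labels p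
  · exact ((mem_etaOp_iff hij.1 hij.2).1 h).2 ▸ hp.mergeBlocks hij.1 hij.2
  · rw [etaOp_eq_some_self hij, Option.mem_some_iff] at h
    exact h ▸ hp

theorem exists_mem_etaOp_compat_iff (hp : BlocksDisjoint p) (hq : BlocksDisjoint q)
    (hi : i ∈ labels p) (hj : j ∈ labels p) :
    (∃ p' ∈ etaOp i j p, Compat p' q) ↔ CompatWithEdge i j p q := by
  simp only [mem_etaOp_iff hi hj, ← compat_mergeBlocks_iff hp hq hi hj, and_assoc,
    exists_and_left, exists_eq_left']

theorem exists_mem_etaOp_compat_swap (hp : BlocksDisjoint p) (hq : BlocksDisjoint q)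
    (h : ∃ p' ∈ etaOp i j p, Compat p' q) :
    ∃ q' ∈ etaOp i j q, Compat p q' := by
  have hlabels : labels p = labels q := by
    obtain ⟨p', hp', hcompat⟩ := h
    rw [← labels_eq_of_mem_etaOp hp', hcompat.1]
  simp only [compat_comm (p := p)]
  by_cases hij : i ∈ labels p ∧ j ∈ labels p
  · have hij' := hlabels ▸ hij
    rw [exists_mem_etaOp_compat_iff hp hq hij.1 hij.2] at h
    rw [exists_mem_etaOp_compat_iff hq hp hij'.1 hij'.2]
    exact h.symm
  · simp only [etaOp_eq_some_self hij, Option.mem_some_iff, exists_eq_left'] at h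
    simpa only [etaOp_eq_some_self (hlabels ▸ hij), Option.mem_some_iff, exists_eq_left']
      using compat_comm.1 h

end Duality

section Representation

variable {op : TWP k → Option (TWP k)} {D : TWP k → Finset (TWP k)}

open scoped Classical in
theorem natCast_card_filter_exOp (op : TWP k → Option (TWP k)) (R : Finset (TWP k))
    (P : TWP k → Prop) :
    (#{p ∈ exOp op R | P p} : ZMod 2) = #{q ∈ R | ∃ p ∈ op q, P p} := by
  set values := {p ∈ R.biUnion fun q => (op q).toFinset | P p} with hvalues
  have hfibers : #{q ∈ R | ∃ p ∈ op q, P p} = ∑ p ∈ values, #{q ∈ R | op q = some p} := by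
    have hunion : {q ∈ R | ∃ p ∈ op q, P p} = values.biUnion fun p => {q ∈ R | op q = some p} := by
      ext q
      simp only [hvalues, mem_filter, mem_biUnion, Option.mem_toFinset, Option.mem_def]
      grind
    rw [hunion, card_biUnion]
    intro p _ p' _ hne
    exact disjoint_filter.2 fun q _ hp hp' => hne (Option.some_injective _ (hp.symm.trans hp'))
  have hodd : {p ∈ exOp op R | P p} = {p ∈ values | #{q ∈ R | op q = some p} % 2 = 1} := by
    simp only [exOp, hvalues, filter_filter, and_comm]
  rw [hfibers, hodd, Nat.cast_sum, ← sum_boole]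
  refine sum_congr rfl fun p _ => ?_
  split_ifs with h
  · exact (ZMod.natCast_eq_one_iff_odd.2 (Nat.odd_iff.2 h)).symm
  · exact (ZMod.natCast_eq_zero_iff_even.2 (Nat.not_odd_iff_even.1 (Nat.odd_iff.not.2 h))).symm

open scoped Classical in
/-- The map `D` is adjoint to the operation `op` for the compatibility pairing modulo 2: `op q` is
compatible with `r` exactly if an odd number of the patterns in `D r` is compatible with `q`. -/
structure IsAdjoint (op : TWP k → Option (TWP k)) (D : TWP k → Finset (TWP k)) : Prop where
  isTWPat_of_mem : ∀ {r r'}, IsTWPat r → r' ∈ D r → IsTWPat r'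
  exists_compat_iff_odd : ∀ {q r}, IsTWPat q → IsTWPat r →
    ((∃ p ∈ op q, Compat p r) ↔ Odd #{r' ∈ D r | Compat q r'})

open scoped Classical in
theorem IsAdjoint.natCast_card_filter_compat_exOp (h : IsAdjoint op D) {R : Finset (TWP k)}
    (hR : ∀ p ∈ R, IsTWPat p) (hr : IsTWPat r) :
    (#{p ∈ exOp op R | Compat p r} : ZMod 2) = ∑ r' ∈ D r, (#{q ∈ R | Compat q r'} : ZMod 2) := by
  have hpair : ∀ q ∈ R, (if ∃ p ∈ op q, Compat p r then 1 else 0 : ZMod 2) =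
      #{r' ∈ D r | Compat q r'} := by
    intro q hq
    have hiff := h.exists_compat_iff_odd (hR q hq) hr
    split_ifs with hcompat
    · exact (ZMod.natCast_eq_one_iff_odd.2 (hiff.1 hcompat)).symm
    · exact (ZMod.natCast_eq_zero_iff_even.2 (Nat.not_odd_iff_even.1 (hiff.not.1 hcompat))).symm
  calc (#{p ∈ exOp op R | Compat p r} : ZMod 2)
      = #{q ∈ R | ∃ p ∈ op q, Compat p r} := natCast_card_filter_exOp op R _
    _ = ∑ q ∈ R, (#{r' ∈ D r | Compat q r'} : ZMod 2) := by rw [← sum_boole, sum_congr rfl hpair]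
    _ = ∑ r' ∈ D r, (#{q ∈ R | Compat q r'} : ZMod 2) :=
        mod_cast congrArg (Nat.cast : ℕ → ZMod 2)
          (sum_card_bipartiteAbove_eq_sum_card_bipartiteBelow Compat)

theorem IsAdjoint.represents_exOp (h : IsAdjoint op D) {R S : Finset (TWP k)}
    (hR : ∀ p ∈ R, IsTWPat p) (hS : ∀ p ∈ S, IsTWPat p) (hrep : Represents R S) :
    Represents (exOp op R) (exOp op S) := by
  intro r hr
  rw [← ZMod.natCast_eq_natCast_iff', h.natCast_card_filter_compat_exOp hR hr,
    h.natCast_card_filter_compat_exOp hS hr]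
  exact sum_congr rfl fun r' hr' =>
    (ZMod.natCast_eq_natCast_iff' _ _ 2).2 (hrep r' (h.isTWPat_of_mem hr hr'))

open scoped Classical in
theorem odd_card_filter_option_toFinset_iff {α : Type*} (o : Option α) (P : α → Prop) :
    Odd #{x ∈ o.toFinset | P x} ↔ ∃ x ∈ o, P x := by
  cases o with
  | none => simp
  | some x => by_cases hx : P x <;> simp [filter_singleton, hx]

theorem isAdjoint_addLab (hi : i ≠ 0) :
    IsAdjoint (addLab i) fun r => if i ∈ labels r then {eraseLabel i r} else ∅ where
  isTWPat_of_mem {r r'} hr hr' := by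
    split_ifs at hr' with hir
    · exact mem_singleton.1 hr' ▸ hr.eraseLabel hi
    · simp at hr'
  exists_compat_iff_odd {q r} hq hr := by
    have hiff : (∃ p ∈ addLab i q, Compat p r) ↔ i ∈ labels r ∧ Compat q (eraseLabel i r) := by
      by_cases hiq : i ∈ labels q
      · have hnot : ¬ Compat q (eraseLabel i r) := fun h => by
          rw [h.1, labels_eraseLabel] at hiq
          exact notMem_erase i _ hiq
        simp [addLab, hiq, hnot]
      · rw [← compat_insert_singleton_iff hq.blocksDisjoint hr.blocksDisjoint hiq]
        simp [addLab, hiq]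
    rw [hiff]
    by_cases hir : i ∈ labels r <;> by_cases hc : Compat q (eraseLabel i r) <;>
      simp [filter_singleton, hir, hc]

theorem isAdjoint_delLab (i : Fin (k + 1)) :
    IsAdjoint (delLab i) fun r => if i ∈ labels r then ∅ else {r, insert {i} r} where
  isTWPat_of_mem {r r'} hr hr' := by
    split_ifs at hr' with hir
    · simp at hr'
    · rcases mem_insert.1 hr' with rfl | hr'
      · exact hr
      · exact mem_singleton.1 hr' ▸ hr.insert_singleton hir
  exists_compat_iff_odd {q r} hq hr := by
    have hdel : (∃ p ∈ delLab i q, Compat p r) ↔ Compat (eraseLabel i q) r := by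
      simp [delLab, eraseLabel]
    rw [hdel]
    by_cases hir : i ∈ labels r
    · have hnot : ¬ Compat (eraseLabel i q) r := fun h => by
        rw [← h.1, labels_eraseLabel] at hir
        exact notMem_erase i _ hir
      simp [hir, hnot]
    · have hne : r ≠ insert {i} r := fun h => hir (by
        rw [h, labels_insert_singleton]
        exact mem_insert_self i _)
      rw [compat_eraseLabel_iff hq.blocksDisjoint hr.blocksDisjoint hir, if_neg hir]
      by_cases hc : Compat q r <;> by_cases hc' : Compat q (insert {i} r) <;>
        simp [Xor, filter_insert, filter_singleton, hc, hc', hne]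

theorem isAdjoint_etaOp (i j : Fin (k + 1)) :
    IsAdjoint (etaOp i j) fun r => (etaOp i j r).toFinset where
  isTWPat_of_mem hr hr' := hr.of_mem_etaOp (Option.mem_toFinset.1 hr')
  exists_compat_iff_odd {q r} hq hr := by
    rw [odd_card_filter_option_toFinset_iff]
    refine ⟨exists_mem_etaOp_compat_swap hq.blocksDisjoint hr.blocksDisjoint, fun h => ?_⟩
    simp only [compat_comm (p := q)] at h
    simpa only [compat_comm (p := r)] using
      exists_mem_etaOp_compat_swap hr.blocksDisjoint hq.blocksDisjoint h

end Representation

end TreewidthPatterns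

/-- For `i ≠ j` in `{1,…,k}`, the exclusive versions of `· ∪ i`, `· ∖ i`
and `η_{i,j}` preserve representation. -/
theorem exclusive_ops_preserve_representation {k : ℕ} (i j : Fin (k + 1))
    (hi : i ≠ 0) (hj : j ≠ 0) (hij : i ≠ j)
    (R S : Finset (TWP k)) (hR : ∀ p ∈ R, IsTWPat p) (hS : ∀ p ∈ S, IsTWPat p)
    (hrep : Represents R S) :
    Represents (exOp (addLab i) R) (exOp (addLab i) S) ∧
    Represents (exOp (delLab i) R) (exOp (delLab i) S) ∧
    Represents (exOp (etaOp i j) R) (exOp (etaOp i j) S) := by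
  exact ⟨(isAdjoint_addLab hi).represents_exOp hR hS hrep,
    (isAdjoint_delLab i).represents_exOp hR hS hrep,
    (isAdjoint_etaOp i j).represents_exOp hR hS hrep⟩
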